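/- Let K, n ∈ ℕ and let (U, E) be a K-fat model of the (2n × n)-grid H in a graph G. Then for every i ≤ n, every set W ⊆ V(G) consisting of exactly one vertex from each branch set U_x with x a vertex of the i-th row of H is K-fat n-path-connected in G. -/

import Mathlib

open SimpleGraph

namespace CGT

/-- Distance between two vertex sets, as an extended natural number. -/
noncomputable def sDist {V : Type*} (G : SimpleGraph V) (U U' : Set V) : ℕ∞ :=
  ⨅ (u : U) (v : U'), G.edist u.1 v.1

/-- The ball of radius `r` around a vertex set `U`. -/
def gBall {V : Type*} (G : SimpleGraph V) (U : Set V) (r : ℕ) : Set V :=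
  {v | ∃ u ∈ U, G.edist u v ≤ (r : ℕ∞)}

/-- A set of vertices is connected if the induced subgraph is connected. -/
def SetConn {V : Type*} (G : SimpleGraph V) (U : Set V) : Prop :=
  (G.induce U).Connected

/-- The vertex set of a walk. -/
def walkSupp {V : Type*} {G : SimpleGraph V} {a b : V} (p : G.Walk a b) : Set V :=
  {v | v ∈ p.support}

/-- `X` separates `Y` and `Z` in `G`: every path with one end in `Y` and one in `Z`
contains a vertex of `X`. -/
def Separates {V : Type*} (G : SimpleGraph V) (X Y Z : Set V) : Prop :=
  ∀ ⦃y z : V⦄, y ∈ Y → z ∈ Z → ∀ p : G.Walk y z, p.IsPath → ∃ x ∈ X, x ∈ p.support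

/-- `f` is an `(M,A)`-quasi-isometry from `G` to `H`.  The two-sided distance bound
`M⁻¹ d_G(u,v) - A ≤ d_H(f u, f v) ≤ M d_G(u,v) + A` is stated multiplied out over `ℕ∞`. -/
structure IsQI {V V' : Type*} (M A : ℕ) (G : SimpleGraph V) (H : SimpleGraph V')
    (f : V → V') : Prop where
  upper : ∀ u v : V, H.edist (f u) (f v) ≤ (M : ℕ∞) * G.edist u v + (A : ℕ∞)
  lower : ∀ u v : V, G.edist u v ≤ (M : ℕ∞) * H.edist (f u) (f v) + (M : ℕ∞) * (A : ℕ∞)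
  dense : ∀ w : V', ∃ v : V, H.edist w (f v) ≤ (A : ℕ∞)

/-- `G` is `(M,A)`-quasi-isometric to `H`. -/
def QIsometric {V V' : Type*} (M A : ℕ) (G : SimpleGraph V) (H : SimpleGraph V') : Prop :=
  ∃ f : V → V', IsQI M A G H f

/-- `X` is a minor of `G`. -/
def HasMinor {V W : Type*} (G : SimpleGraph V) (X : SimpleGraph W) : Prop :=
  ∃ U : W → Set V,
    (∀ x, (U x).Nonempty) ∧ (∀ x, SetConn G (U x)) ∧
    (∀ ⦃x y⦄, x ≠ y → Disjoint (U x) (U y)) ∧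
    ∀ ⦃x y⦄, X.Adj x y → ∃ u ∈ U x, ∃ v ∈ U y, G.Adj u v

/-- The `(a × b)`-grid graph. -/
def gridGraph (a b : ℕ) : SimpleGraph (Fin a × Fin b) :=
  SimpleGraph.fromRel (fun u v =>
    (u.1 = v.1 ∧ u.2.1 + 1 = v.2.1) ∨ (u.2 = v.2 ∧ u.1.1 + 1 = v.1.1))

/-- A `K`-fat model of `X` in `G`: disjoint connected branch sets joined by internally
disjoint branch paths, all pairwise at distance at least `K` except for a branch path and
the branch sets of its endpoints. -/
structure FatModel {V W : Type*} (G : SimpleGraph V) (X : SimpleGraph W) (K : ℕ) where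
  branch : W → Set V
  branch_nonempty : ∀ x, (branch x).Nonempty
  branch_connected : ∀ x, SetConn G (branch x)
  branch_disjoint : ∀ ⦃x y⦄, x ≠ y → Disjoint (branch x) (branch y)
  pathEnd : ∀ ⦃x y⦄, X.Adj x y → V
  path : ∀ ⦃x y⦄ (e : X.Adj x y), G.Walk (pathEnd e) (pathEnd e.symm)
  path_isPath : ∀ ⦃x y⦄ (e : X.Adj x y), (path e).IsPath
  path_symm : ∀ ⦃x y⦄ (e : X.Adj x y), path e.symm = (path e).reverse
  pathEnd_mem : ∀ ⦃x y⦄ (e : X.Adj x y), pathEnd e ∈ branch x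
  path_meets : ∀ ⦃x y⦄ (e : X.Adj x y) (z : W) (v : V), v ∈ (path e).support → v ∈ branch z →
    (z = x ∧ v = pathEnd e) ∨ (z = y ∧ v = pathEnd e.symm)
  path_int_disjoint : ∀ ⦃x y x' y'⦄ (e : X.Adj x y) (e' : X.Adj x' y'), s(x, y) ≠ s(x', y') →
    ∀ v, v ∈ (path e).support → v ∈ (path e').support → v = pathEnd e' ∨ v = pathEnd e'.symm
  fat_branch : ∀ ⦃x y⦄, x ≠ y → (K : ℕ∞) ≤ sDist G (branch x) (branch y)
  fat_path_branch : ∀ ⦃x y⦄ (e : X.Adj x y) (z : W), z ≠ x → z ≠ y →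
    (K : ℕ∞) ≤ sDist G (walkSupp (path e)) (branch z)
  fat_paths : ∀ ⦃x y x' y'⦄ (e : X.Adj x y) (e' : X.Adj x' y'), s(x, y) ≠ s(x', y') →
    (K : ℕ∞) ≤ sDist G (walkSupp (path e)) (walkSupp (path e'))

/-- `X` is a `K`-fat minor of `G`. -/
def IsFatMinor {V W : Type*} (G : SimpleGraph V) (X : SimpleGraph W) (K : ℕ) : Prop :=
  Nonempty (FatModel G X K)

/-- `W` is a `K`-fat `n`-path-connected set in `G`. -/
def FatPathConn {V : Type*} (G : SimpleGraph V) (K n : ℕ) (W : Set V) : Prop :=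
  (∃ S : Finset V, ↑S ⊆ W ∧ 2 * n ≤ S.card) ∧
  (∀ ⦃u v : V⦄, u ∈ W → v ∈ W → u ≠ v → (K : ℕ∞) ≤ G.edist u v) ∧
  ∀ l : ℕ, l ≤ n → ∀ A B : Finset V, ↑A ⊆ W → ↑B ⊆ W → A.card = l → B.card = l →
    ∃ (a b : Fin l → V) (P : ∀ i : Fin l, G.Walk (a i) (b i)),
      (∀ i, (P i).IsPath) ∧ (∀ i, a i ∈ A ∧ b i ∈ B) ∧
      ∀ i j, i ≠ j → (K : ℕ∞) ≤ sDist G (walkSupp (P i)) (walkSupp (P j))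

end CGT

namespace Ghdm

/-- Raw vertex codes for the graphs `G_{h,d,m}`:
`path k` is the `k`-th vertex of the base path; `tree j i p` is the vertex at position `p`
of the `i`-th binary tree at level `j` (the root being position `[]`); and
`spine j i k t e s` is the `s`-th internal vertex of the spine from the `k`-th leaf of that
tree to the `e`-th element of the `t`-th local gluing set at level `j-1`. -/
inductive Raw : Type where
  | path (k : ℕ)
  | tree (j i : ℕ) (p : List Bool)
  | spine (j i k t e s : ℕ)
deriving DecidableEq

/-- `N = 2^{h+1} - 1`, the number of copies of `G_{h,d,m-1}` glued inside `G_{h,d,m}`. -/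
def NN (h : ℕ) : ℕ := 2 ^ (h + 1) - 1

/-- Canonical representative of a raw vertex code: all tree roots are identified with the
single root `tree m 1 []`, and the leftmost leaf of tree `i > 1` is identified with the
rightmost leaf of tree `i - 1` (consecutive copies are glued along these leaves). -/
def canon (h m : ℕ) : Raw → Raw
  | .tree j i p =>
    if p = [] then .tree m 1 []
    else if p = List.replicate h false ∧ 1 < i then .tree j (i - 1) (List.replicate h true)
    else .tree j i p
  | x => x

/-- The `q`-bit binary representation of `i` (most significant bit first);
`false` means "left". -/
def natToBits (q i : ℕ) : List Bool := (List.range q).map fun a => Nat.testBit i (q - 1 - a)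

/-- Position of the `k`-th leaf (1-based, from the left) in a binary tree of height `h`. -/
def leafPos (h k : ℕ) : List Bool := natToBits h (k - 1)

/-- The `e`-th element of the `g`-th gluing set `V^{jv}_g` (at level `jv`):
its element `e = 1` is an anchor of the base path, and its element `e ≥ 2` is a shared
extreme leaf of the trees at level `e`. -/
def VsetElem (h d jv g e : ℕ) : Raw :=
  if e = 1 then .path ((g - 1) * NN h ^ (jv - 1) * (d + 1))
  else if (g - 1) * NN h ^ (jv - e) = 0 then .tree e 1 (List.replicate h false)
  else .tree e ((g - 1) * NN h ^ (jv - e)) (List.replicate h true)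

/-- Valid (canonical) vertex codes of `G_{h,d,m}`. -/
def Valid (h d m : ℕ) : Raw → Prop
  | .path k => k ≤ (d + 1) * NN h ^ (m - 1)
  | .tree j i p => 2 ≤ j ∧ j ≤ m ∧ 1 ≤ i ∧ i ≤ NN h ^ (m - j) ∧ p.length ≤ h ∧
      (p = [] → j = m ∧ i = 1) ∧ (p = List.replicate h false → p ≠ [] → i = 1)
  | .spine j i k t e s => 2 ≤ j ∧ j ≤ m ∧ 1 ≤ i ∧ i ≤ NN h ^ (m - j) ∧
      1 ≤ k ∧ k ≤ 2 ^ h ∧ (t = 2 * k - 2 ∨ t = 2 * k + 1) ∧ 1 ≤ t ∧ t ≤ 2 ^ (h + 1) ∧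
      1 ≤ e ∧ e ≤ j - 1 ∧ 1 ≤ s ∧ s ≤ d

/-- Generating adjacencies between raw vertex codes: consecutive base path vertices,
parent/child in the binary trees, consecutive spine vertices, a spine and the leaf it
starts at, a spine and the gluing-set vertex it ends at (the latter collapsed to a single
edge when `d = 0`). -/
inductive rawAdj (h d : ℕ) : Raw → Raw → Prop
  | base (k : ℕ) : rawAdj h d (.path k) (.path (k + 1))
  | child (j i : ℕ) (p : List Bool) (b : Bool) : p.length < h →
      rawAdj h d (.tree j i p) (.tree j i (p ++ [b]))
  | step (j i k t e s : ℕ) : rawAdj h d (.spine j i k t e s) (.spine j i k t e (s + 1))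
  | toLeaf (j i k t e : ℕ) : rawAdj h d (.tree j i (leafPos h k)) (.spine j i k t e 1)
  | toV (j i k t e : ℕ) :
      rawAdj h d (.spine j i k t e d) (VsetElem h d (j - 1) ((i - 1) * NN h + t) e)
  | short (j i k t e : ℕ) : d = 0 → 1 ≤ k → k ≤ 2 ^ h → (t = 2 * k - 2 ∨ t = 2 * k + 1) →
      1 ≤ t → t ≤ 2 ^ (h + 1) → 1 ≤ e → e ≤ j - 1 →
      rawAdj h d (.tree j i (leafPos h k)) (VsetElem h d (j - 1) ((i - 1) * NN h + t) e)

/-- Adjacency of canonical representatives. -/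
def rel (h d m : ℕ) (x y : Raw) : Prop :=
  ∃ a b, rawAdj h d a b ∧ x = canon h m a ∧ y = canon h m b

/-- The vertex set of `G_{h,d,m}`. -/
def Verts (h d m : ℕ) : Set Raw := {x | Valid h d m x}

/-- The graph `G_{h,d,m}`. -/
def G (h d m : ℕ) : SimpleGraph (Verts h d m) :=
  (SimpleGraph.fromRel (rel h d m)).induce (Verts h d m)

/-- Lift a set of raw codes to a set of vertices of `G_{h,d,m}`. -/
def lift {h d m : ℕ} (S : Set Raw) : Set (Verts h d m) := Subtype.val ⁻¹' S

/-- The root `R(G_{h,d,m})`. -/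
def RootR (m : ℕ) : Raw := .tree m 1 []

/-- The gluing set `V^{jv}_g` of `G_{h,d,m}`, as a set of raw codes. -/
def VsetRaw (h d m jv g : ℕ) : Set Raw :=
  {x | ∃ e, 1 ≤ e ∧ e ≤ jv ∧ x = canon h m (VsetElem h d jv g e)}

/-- The set `S(G_{h,d,m})`. -/
def SsetR (h d m : ℕ) : Set Raw :=
  VsetRaw h d m (m - 1) 1 ∪ {canon h m (.tree m 1 (leafPos h 1))}

/-- The set `T(G_{h,d,m})`. -/
def TsetR (h d m : ℕ) : Set Raw :=
  VsetRaw h d m (m - 1) (2 ^ (h + 1)) ∪ {canon h m (.tree m 1 (leafPos h (2 ^ h)))}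

/-- For a vertex of the top binary tree at position `p`, the (1-based) index of the
leftmost leaf of the top tree below it. -/
def kOf (h : ℕ) (p : List Bool) : ℕ :=
  (p.foldl (fun a b => 2 * a + if b then 1 else 0) 0) * 2 ^ (h - p.length) + 1

/-- `S(Δ(x))` for the vertex `x` of the top binary tree `B(G_{h,d,m})` at position `p`. -/
def SDeltaR (h d m : ℕ) (p : List Bool) : Set Raw :=
  VsetRaw h d m (m - 1) (2 * kOf h p - 1) ∪ {canon h m (.tree m 1 (leafPos h (kOf h p)))}

/-- The leaf of `B(G_{h,d,m})` immediately to the left of the leftmost leaf below the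
top-tree vertex at position `p`; it is the unique leaf joined by spines to `S(Δ(x))`. -/
def leafLeftR (h m : ℕ) (p : List Bool) : Raw :=
  canon h m (.tree m 1 (leafPos h (kOf h p - 1)))

end Ghdm


namespace FPC

open CGT

/-- `x` lies between `a` and `b` (in either order). -/
def Btw (a b x : ℕ) : Prop := (a ≤ x ∧ x ≤ b) ∨ (b ≤ x ∧ x ≤ a)

lemma pairing {N : ℕ} (l : ℕ) : ∀ A B : Finset (Fin N), A.card = l → B.card = l →
    ∃ a b : Fin l → Fin N, (∀ k, a k ∈ A ∧ b k ∈ B) ∧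
      ∀ j k, j < k → ¬ Btw (a j) (b j) (a k) ∧ ¬ Btw (a j) (b j) (b k) := by
  induction l with
  | zero =>
    intro A B _ _
    exact ⟨Fin.elim0, Fin.elim0, fun k => k.elim0, fun k => k.elim0⟩
  | succ l ih =>
    intro A B hA hB
    have hA0 : A.Nonempty := by rw [← Finset.card_pos]; omega
    have hB0 : B.Nonempty := by rw [← Finset.card_pos]; omega
    obtain ⟨⟨p, q⟩, hpq, hmin⟩ := Finset.exists_min_image (A ×ˢ B)
      (fun z => (z.1.val - z.2.val) + (z.2.val - z.1.val)) (hA0.product hB0)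
    rw [Finset.mem_product] at hpq
    obtain ⟨hp, hq⟩ := hpq
    simp only at hp hq
    obtain ⟨a, b, hab, hsep⟩ := ih (A.erase p) (B.erase q)
      (by rw [Finset.card_erase_of_mem hp]; omega) (by rw [Finset.card_erase_of_mem hq]; omega)
    refine ⟨Fin.cons p a, Fin.cons q b, ?_, ?_⟩
    · intro k
      refine Fin.cases ?_ (fun k => ?_) k
      · simpa using ⟨hp, hq⟩
      · simpa using ⟨Finset.mem_of_mem_erase (hab k).1, Finset.mem_of_mem_erase (hab k).2⟩
    · intro j k
      refine Fin.cases ?_ (fun k => ?_) k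
      · intro h; exact absurd h (Fin.not_lt_zero _)
      refine Fin.cases ?_ (fun j => ?_) j
      · intro _
        simp only [Fin.cons_zero, Fin.cons_succ]
        obtain ⟨h1, h2⟩ := hab k
        rw [Finset.mem_erase] at h1 h2
        have m1 := hmin (a k, q) (Finset.mem_product.2 ⟨h1.2, hq⟩)
        have m2 := hmin (p, b k) (Finset.mem_product.2 ⟨hp, h2.2⟩)
        simp only at m1 m2
        have n1 : (a k).val ≠ p.val := fun h => h1.1 (Fin.ext h)
        have n2 : (b k).val ≠ q.val := fun h => h2.1 (Fin.ext h)
        unfold Btw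
        constructor <;> omega
      · intro h
        simpa using hsep j k (by simpa using h)

/-- The row used by the `k`-th arch. -/
def rowv (n i k : ℕ) : ℕ := if i + k < n then i + k else n - 1 - k

lemma rowv_lt {n i k : ℕ} (hi : i < n) : rowv n i k < n := by
  unfold rowv; split <;> omega

lemma rowv_sep {n i j k : ℕ} (hi : i < n) (hk : k < n) (hjk : j < k) :
    ¬ Btw i (rowv n i j) (rowv n i k) := by
  unfold rowv Btw; split <;> split <;> omega

section model

variable {V X : Type*} {G : SimpleGraph V} {H : SimpleGraph X} {K : ℕ}

/-- Part of the model over a vertex set. -/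
def T (Mo : FatModel G H K) (S : Set X) : Set V :=
  {v | (∃ z ∈ S, v ∈ Mo.branch z) ∨
    ∃ z ∈ S, ∃ z' ∈ S, ∃ e : H.Adj z z', v ∈ (Mo.path e).support}

lemma le_sDist {A B : Set V} : (K : ℕ∞) ≤ sDist G A B ↔
    ∀ u ∈ A, ∀ v ∈ B, (K : ℕ∞) ≤ G.edist u v := by
  simp [sDist, le_iInf_iff]

lemma T_far (Mo : FatModel G H K) {S S' : Set X} (hd : ∀ z ∈ S, z ∉ S') :
    ∀ u ∈ T Mo S, ∀ v ∈ T Mo S', (K : ℕ∞) ≤ G.edist u v := by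
  rintro u (⟨z, hz, hu⟩ | ⟨z, hz, z', hz', e, hu⟩) v (⟨y, hy, hv⟩ | ⟨y, hy, y', hy', f, hv⟩)
  · exact le_sDist.1 (Mo.fat_branch (x := z) (y := y) (by rintro rfl; exact hd _ hz hy)) u hu v hv
  · rw [SimpleGraph.edist_comm]
    exact le_sDist.1 (Mo.fat_path_branch f z (by rintro rfl; exact hd _ hz hy)
      (by rintro rfl; exact hd _ hz hy')) v hv u hu
  · exact le_sDist.1 (Mo.fat_path_branch e y (by rintro rfl; exact hd _ hz hy)
      (by rintro rfl; exact hd _ hz' hy)) u hu v hv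
  · refine le_sDist.1 (Mo.fat_paths e f ?_) u hu v hv
    intro h
    rcases Sym2.eq_iff.1 h with ⟨rfl, rfl⟩ | ⟨rfl, rfl⟩
    · exact hd _ hz hy
    · exact hd _ hz hy'

/-- Linking inside the part of the model over `S`. -/
def Conn (Mo : FatModel G H K) (S : Set X) (x y : X) : Prop :=
  ∀ u ∈ Mo.branch x, ∀ v ∈ Mo.branch y, ∃ p : G.Walk u v, ∀ t ∈ p.support, t ∈ T Mo S

lemma Conn.rfl' (Mo : FatModel G H K) {S : Set X} {x : X} (hx : x ∈ S) : Conn Mo S x x := by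
  intro u hu v hv
  obtain ⟨p⟩ := (Mo.branch_connected x).preconnected ⟨u, hu⟩ ⟨v, hv⟩
  refine ⟨p.map (SimpleGraph.Embedding.induce _).toHom, ?_⟩
  intro t ht
  have ht' := ht
  erw [SimpleGraph.Walk.support_map, List.mem_map] at ht'
  obtain ⟨s, _, rfl⟩ := ht'
  exact Or.inl ⟨x, hx, s.2⟩

lemma Conn.symm {Mo : FatModel G H K} {S : Set X} {x y : X} (h : Conn Mo S x y) :
    Conn Mo S y x := by
  intro u hu v hv
  obtain ⟨p, hp⟩ := h v hv u hu
  exact ⟨p.reverse, fun t ht => hp t (by simpa using ht)⟩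

lemma Conn.trans {Mo : FatModel G H K} {S : Set X} {x y z : X} (h : Conn Mo S x y)
    (h' : Conn Mo S y z) : Conn Mo S x z := by
  intro u hu v hv
  obtain ⟨m, hm⟩ := Mo.branch_nonempty y
  obtain ⟨p, hp⟩ := h u hu m hm
  obtain ⟨q, hq⟩ := h' m hm v hv
  refine ⟨p.append q, fun t ht => ?_⟩
  rcases (SimpleGraph.Walk.mem_support_append_iff _ _).1 ht with h | h
  exacts [hp t h, hq t h]

lemma Conn.adj (Mo : FatModel G H K) {S : Set X} {x y : X} (hx : x ∈ S) (hy : y ∈ S)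
    (e : H.Adj x y) : Conn Mo S x y := by
  intro u hu v hv
  obtain ⟨p, hp⟩ := Conn.rfl' Mo hx u hu _ (Mo.pathEnd_mem e)
  obtain ⟨q, hq⟩ := Conn.rfl' Mo hy _ (Mo.pathEnd_mem e.symm) v hv
  refine ⟨(p.append (Mo.path e)).append q, fun t ht => ?_⟩
  rcases (SimpleGraph.Walk.mem_support_append_iff _ _).1 ht with h | h
  · rcases (SimpleGraph.Walk.mem_support_append_iff _ _).1 h with h | h
    · exact hp t h
    · exact Or.inr ⟨x, hx, y, hy, e, h⟩
  · exact hq t h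

end model

section grid

variable {V : Type*} {G : SimpleGraph V} {K a b : ℕ}

lemma conn_line {X : Type*} {H : SimpleGraph X} (Mo : FatModel G H K) {S : Set X} {N : ℕ}
    (f : Fin N → X) (hf : ∀ s t : Fin N, s.val + 1 = t.val → H.Adj (f s) (f t)) (s t : Fin N)
    (hS : ∀ r : Fin N, Btw s t r → f r ∈ S) : Conn Mo S (f s) (f t) := by
  have key : ∀ d : ℕ, ∀ s t : Fin N, s.val + d = t.val →
      (∀ r : Fin N, Btw s t r → f r ∈ S) → Conn Mo S (f s) (f t) := by
    intro d
    induction d with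
    | zero =>
      intro s t h hS
      obtain rfl : s = t := Fin.ext (by omega)
      exact Conn.rfl' Mo (hS s (by unfold Btw; omega))
    | succ d ih =>
      intro s t h hS
      have hlt : s.val + d < N := by have := t.2; omega
      refine (ih s ⟨s.val + d, hlt⟩ _root_.rfl (fun r hr => hS r ?_)).trans
        (Conn.adj Mo (hS _ ?_) (hS _ ?_) (hf _ _ ?_))
      · simp only [Btw] at hr ⊢; omega
      · simp only [Btw]; omega
      · simp only [Btw]; omega
      · simp only; omega
  rcases le_total s.val t.val with h | h
  · exact key (t.val - s.val) s t (by omega) hS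
  · exact (key (s.val - t.val) t s (by omega)
      (fun r hr => hS r (by simp only [Btw] at hr ⊢; omega))).symm

/-- The vertex set of an arch. -/
def arch {a b : ℕ} (i r : Fin b) (p q : Fin a) : Set (Fin a × Fin b) :=
  {z | ((z.1 = p ∨ z.1 = q) ∧ Btw i r z.2) ∨ (z.2 = r ∧ Btw p q z.1)}

lemma arch_conn (Mo : FatModel G (gridGraph a b) K) (i r : Fin b) (p q : Fin a) :
    Conn Mo (arch i r p q) (p, i) (q, i) := by
  have hv : ∀ c : Fin a, ∀ s t : Fin b, s.val + 1 = t.val →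
      (gridGraph a b).Adj (c, s) (c, t) := by
    intro c s t h
    rw [gridGraph, SimpleGraph.fromRel_adj]
    refine ⟨fun e => ?_, Or.inl (Or.inl ⟨rfl, h⟩)⟩
    have := congrArg (fun z : Fin a × Fin b => z.2.val) e
    simp only at this; omega
  have hh : ∀ c : Fin b, ∀ s t : Fin a, s.val + 1 = t.val →
      (gridGraph a b).Adj (s, c) (t, c) := by
    intro c s t h
    rw [gridGraph, SimpleGraph.fromRel_adj]
    refine ⟨fun e => ?_, Or.inl (Or.inr ⟨rfl, h⟩)⟩
    have := congrArg (fun z : Fin a × Fin b => z.1.val) e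
    simp only at this; omega
  have h1 : Conn Mo (arch i r p q) (p, i) (p, r) :=
    conn_line Mo (fun s => (p, s)) (hv p) i r (fun t ht => Or.inl ⟨Or.inl rfl, ht⟩)
  have h2 : Conn Mo (arch i r p q) (p, r) (q, r) :=
    conn_line Mo (fun s => (s, r)) (hh r) p q (fun t ht => Or.inr ⟨rfl, ht⟩)
  have h3 : Conn Mo (arch i r p q) (q, i) (q, r) :=
    conn_line Mo (fun s => (q, s)) (hv q) i r (fun t ht => Or.inl ⟨Or.inr rfl, ht⟩)
  exact (h1.trans h2).trans h3.symm

lemma arch_disj {i r r' : Fin b} {p q p' q' : Fin a} (h1 : ¬ Btw p q p') (h2 : ¬ Btw p q q')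
    (h3 : ¬ Btw i r r') : ∀ z ∈ arch i r p q, z ∉ arch i r' p' q' := by
  have hc : ∀ z ∈ arch i r p q, Btw p q z.1 ∧ Btw i r z.2 := by
    rintro ⟨x, y⟩ (⟨h | h, h'⟩ | ⟨h, h'⟩) <;> simp only at h h' <;> subst h <;>
      refine ⟨?_, ?_⟩ <;> first | exact h' | (simp only [Btw]; omega)
  rintro ⟨x, y⟩ hz hz'
  obtain ⟨c1, c2⟩ := hc _ hz
  rcases hz' with (⟨h | h, -⟩ | ⟨h, -⟩) <;> simp only at h <;> subst h
  exacts [h1 c1, h2 c1, h3 c2]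

end grid

end FPC

/-- in a `K`-fat model of the `(2n × n)`-grid in `G`, any set `W` consisting
of exactly one vertex from each branch set of the `i`-th row is `K`-fat
`n`-path-connected. -/
theorem statement11 (K n : ℕ) {V : Type*} (G : SimpleGraph V)
    (Mo : CGT.FatModel G (CGT.gridGraph (2 * n) n) K)
    (i : Fin n) (w : Fin (2 * n) → V) (hw : ∀ x, w x ∈ Mo.branch (x, i))
    (W : Set V) (hW : W = Set.range w) :
    CGT.FatPathConn G K n W := by
  classical
  subst hW
  have hinj : Function.Injective w := by
    intro x y h
    by_contra hne
    have hd := Mo.branch_disjoint (x := (x, i)) (y := (y, i)) (fun e => hne (congrArg Prod.fst e))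
    exact Set.disjoint_left.1 hd (hw x) (h ▸ hw y)
  refine ⟨⟨Finset.univ.image w, by simp, ?_⟩, ?_, ?_⟩
  · rw [Finset.card_image_of_injective _ hinj]; simp
  · rintro _ _ ⟨x, rfl⟩ ⟨y, rfl⟩ hne
    refine FPC.le_sDist.1 (Mo.fat_branch (x := (x, i)) (y := (y, i)) ?_) _ (hw x) _ (hw y)
    intro e
    exact hne (congrArg w (congrArg Prod.fst e))
  · intro l hl A B hA hB hAc hBc
    have pull : ∀ C : Finset V, (C : Set V) ⊆ Set.range w → C.card = l →
        ∃ C' : Finset (Fin (2 * n)), C'.card = l ∧ ∀ x ∈ C', w x ∈ C := by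
      intro C hC hc
      refine ⟨Finset.univ.filter (fun x => w x ∈ C), ?_, fun x hx => (Finset.mem_filter.1 hx).2⟩
      rw [← hc, ← Finset.card_image_of_injective _ hinj]
      congr 1
      ext v
      simp only [Finset.mem_image, Finset.mem_filter, Finset.mem_univ, true_and]
      constructor
      · rintro ⟨x, hx, rfl⟩
        exact hx
      · intro hv
        obtain ⟨x, rfl⟩ := hC hv
        exact ⟨x, hv, rfl⟩
    obtain ⟨A', hA', hAm⟩ := pull A hA hAc
    obtain ⟨B', hB', hBm⟩ := pull B hB hBc
    obtain ⟨a, b, hab, hsep⟩ := FPC.pairing l A' B' hA' hB'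
    let r : Fin l → Fin n := fun k => ⟨FPC.rowv n i k, FPC.rowv_lt i.2⟩
    have hp : ∀ k, ∃ p : G.Walk (w (a k)) (w (b k)), p.IsPath ∧
        ∀ t ∈ p.support, t ∈ FPC.T Mo (FPC.arch i (r k) (a k) (b k)) := by
      intro k
      obtain ⟨p, hp⟩ := FPC.arch_conn Mo i (r k) (a k) (b k) _ (hw _) _ (hw _)
      exact ⟨p.bypass, p.bypass_isPath, fun t ht => hp t (p.support_bypass_subset_support ht)⟩
    choose P hP hT using hp
    have far : ∀ j k, j < k → ∀ u ∈ (P j).support, ∀ v ∈ (P k).support,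
        (K : ℕ∞) ≤ G.edist u v := by
      intro j k hjk u hu v hv
      refine FPC.T_far Mo (FPC.arch_disj (hsep j k hjk).1 (hsep j k hjk).2 ?_) u (hT j u hu)
        v (hT k v hv)
      exact FPC.rowv_sep i.2 (by have := k.2; omega) hjk
    refine ⟨fun k => w (a k), fun k => w (b k), P, hP,
      fun k => ⟨hAm _ (hab k).1, hBm _ (hab k).2⟩, ?_⟩
    intro j k hjk
    rw [FPC.le_sDist]
    intro u hu v hv
    rcases lt_or_gt_of_ne hjk with h | h
    · exact far j k h u hu v hv
    · rw [SimpleGraph.edist_comm]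
      exact far k j h v hv u hu
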